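/- For every p ≥ 5 the Lie algebras 𝔩_p and 𝔩_p^⌟ are not isomorphic: 𝔩_p contains an element not in its derived subalgebra whose adjoint map has rank one (namely X_2), whereas every element of 𝔩_p^⌟ not in the derived subalgebra has adjoint of rank at least two. -/

import Mathlib

/-!
In `𝔩ₚ` only `⁅X 2, X 1⁆ = -X 3` is nonzero among the brackets of `X 2` with basis vectors, so
`ad (X 2)` has range `ℝ · X 3`; and `X 2` lies outside the derived subalgebra because the second
coordinate vanishes on all brackets.

In `𝔩ₚ^⌟` every `Y i` with `3 ≤ i` is a bracket, so an element `y` outside the derived subalgebra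
has `y₁ ≠ 0` or `y₂ ≠ 0`. If `y₁ ≠ 0`, then `⁅y, Y 3⁆ = y₁ Y 4 + y₂ Y p` and `⁅y, Y 4⁆ = y₁ Y 5` are
independent. If `y₁ = 0` and `y₂ ≠ 0`, then `⁅y, Y 3⁆ = y₂ Y p`, while `⁅y, Y 1⁆` has third
coordinate `-y₂`, so these two are independent. Both cases use `p ≥ 5`. An isomorphism preserves
the derived subalgebra and the rank of the adjoint, so the two algebras are not isomorphic.
-/

/-- Coordinate functionals with respect to a basis indexed by `1, …, p`; for `k` outside this
range the condition on basis vectors says that `c k` vanishes. -/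
lemma exists_coord {L : Type*} [AddCommGroup L] [Module ℝ L] {p : ℕ} {X : ℕ → L}
    (hind : LinearIndependent ℝ (fun i : Fin p => X ((i : ℕ) + 1)))
    (hspan : Submodule.span ℝ (X '' Set.Icc 1 p) = ⊤) :
    ∃ c : ℕ → L →ₗ[ℝ] ℝ, (∀ k j, 1 ≤ j → j ≤ p → c k (X j) = if j = k then 1 else 0) ∧
      ∀ y, y = ∑ i ∈ Finset.Icc 1 p, c i y • X i := by
  have hr : X '' Set.Icc 1 p = Set.range (fun i : Fin p => X ((i : ℕ) + 1)) := by
    ext x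
    constructor
    · rintro ⟨j, ⟨h1, h2⟩, rfl⟩
      exact ⟨⟨j - 1, by omega⟩, by simp [Nat.sub_add_cancel h1]⟩
    · rintro ⟨i, rfl⟩
      exact ⟨i + 1, ⟨by omega, by omega⟩, rfl⟩
  let b := Module.Basis.mk hind (by rw [← hr, hspan])
  let c : ℕ → L →ₗ[ℝ] ℝ := fun k =>
    if h : 1 ≤ k ∧ k ≤ p then b.coord ⟨k - 1, by omega⟩ else 0
  have hc : ∀ k j, 1 ≤ j → j ≤ p → c k (X j) = if j = k then 1 else 0 := by
    intro k j h1 h2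
    have hb : X j = b ⟨j - 1, by omega⟩ := by simp [b, Nat.sub_add_cancel h1]
    by_cases h : 1 ≤ k ∧ k ≤ p
    · simp only [c, h, and_self, dite_true]
      rw [hb, Module.Basis.coord_apply, Module.Basis.repr_self, Finsupp.single_apply]
      congr 1
      rw [Fin.mk.injEq, eq_iff_iff]
      omega
    · have : j ≠ k := by rintro rfl; exact h ⟨h1, h2⟩
      simp only [c, h, dite_false, LinearMap.zero_apply, this, if_false]
  refine ⟨c, hc, fun y => ?_⟩
  have : (LinearMap.id : L →ₗ[ℝ] L) = ∑ i ∈ Finset.Icc 1 p, (c i).smulRight (X i) := by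
    refine LinearMap.ext_on hspan ?_
    rintro _ ⟨j, ⟨h1, h2⟩, rfl⟩
    simp only [LinearMap.id_apply, LinearMap.sum_apply, LinearMap.smulRight_apply, hc _ j h1 h2]
    simp [h1, h2]
  simpa using congrArg (fun f => f y) this

lemma lie_mem_derived {L : Type*} [LieRing L] [LieAlgebra ℝ L] (x y : L) :
    ⁅x, y⁆ ∈ LieAlgebra.derivedSeries ℝ L 1 :=
  LieSubmodule.lie_mem_lie (LieSubmodule.mem_top x) (LieSubmodule.mem_top y)

lemma eq_zero_of_mem_derived {L : Type*} [LieRing L] [LieAlgebra ℝ L] (f : L →ₗ[ℝ] ℝ)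
    (hf : ∀ x y : L, f ⁅x, y⁆ = 0) {z : L} (hz : z ∈ LieAlgebra.derivedSeries ℝ L 1) :
    f z = 0 := by
  have hz' : z ∈ (⁅(⊤ : LieIdeal ℝ L), (⊤ : LieIdeal ℝ L)⁆ : LieIdeal ℝ L) := hz
  rw [← LieSubmodule.mem_toSubmodule, LieSubmodule.lieIdeal_oper_eq_linear_span'] at hz'
  have hle : Submodule.span ℝ {⁅x, n⁆ | (x ∈ (⊤ : LieIdeal ℝ L)) (n ∈ (⊤ : LieIdeal ℝ L))}
      ≤ LinearMap.ker f := by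
    rw [Submodule.span_le]
    rintro _ ⟨x, -, y, -, rfl⟩
    exact hf x y
  exact hle hz'

/-- A functional killing `v ≠ 0` but not `u` certifies that `u` and `v` are independent. -/
lemma two_le_finrank {L : Type*} [AddCommGroup L] [Module ℝ L] [Module.Finite ℝ L]
    (S : Submodule ℝ L) (f : L →ₗ[ℝ] ℝ) {u v : L} (hu : u ∈ S) (hv : v ∈ S)
    (hfu : f u ≠ 0) (hfv : f v = 0) (hv0 : v ≠ 0) : 2 ≤ Module.finrank ℝ S := by
  have hli : LinearIndependent ℝ ![(⟨u, hu⟩ : S), ⟨v, hv⟩] := by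
    rw [LinearIndependent.pair_iff]
    intro s t h
    have h' : s • u + t • v = 0 := congrArg Subtype.val h
    have hs : s = 0 := by simpa [hfv, hfu] using congrArg f h'
    subst hs
    exact ⟨rfl, by simpa [hv0] using h'⟩
  simpa using hli.fintype_card_le_finrank

/-- For `p ≥ 5` the Lie algebras `𝔩ₚ` (basis `X 1, …, X p`, nonzero brackets
`[X 1, X i] = X (i+1)` for `2 ≤ i ≤ p-1`) and `𝔩ₚ^⌟` (additionally
`[Y 2, Y 3] = Y p`) are not isomorphic: `𝔩ₚ` contains an element, namely `X 2`,
not in its derived subalgebra whose adjoint has rank one, whereas every element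
of `𝔩ₚ^⌟` not in the derived subalgebra has adjoint of rank at least two. -/
theorem model_filiform_not_iso_corner (p : ℕ) (hp : 5 ≤ p)
    {L₁ L₂ : Type*} [LieRing L₁] [LieAlgebra ℝ L₁] [LieRing L₂] [LieAlgebra ℝ L₂]
    (X : ℕ → L₁) (Y : ℕ → L₂)
    -- `L₁` is the model filiform Lie algebra `𝔩ₚ` with basis `X 1, …, X p`:
    (hindX : LinearIndependent ℝ (fun i : Fin p => X ((i : ℕ) + 1)))
    (hspanX : Submodule.span ℝ (X '' Set.Icc 1 p) = ⊤)
    (hbrackX : ∀ i, 2 ≤ i → i ≤ p - 1 → ⁅X 1, X i⁆ = X (i + 1))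
    (hzeroX : ∀ i j, 1 ≤ i → i ≤ p → 1 ≤ j → j ≤ p →
      ¬(i = 1 ∧ 2 ≤ j ∧ j ≤ p - 1) → ¬(j = 1 ∧ 2 ≤ i ∧ i ≤ p - 1) →
      ⁅X i, X j⁆ = 0)
    -- `L₂` is the Lie algebra `𝔩ₚ^⌟` with basis `Y 1, …, Y p`:
    (hindY : LinearIndependent ℝ (fun i : Fin p => Y ((i : ℕ) + 1)))
    (hspanY : Submodule.span ℝ (Y '' Set.Icc 1 p) = ⊤)
    (hbrackY : ∀ i, 2 ≤ i → i ≤ p - 1 → ⁅Y 1, Y i⁆ = Y (i + 1))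
    (hbrackY' : ⁅Y 2, Y 3⁆ = Y p)
    (hzeroY : ∀ i j, 1 ≤ i → i ≤ p → 1 ≤ j → j ≤ p →
      ¬(i = 1 ∧ 2 ≤ j ∧ j ≤ p - 1) → ¬(j = 1 ∧ 2 ≤ i ∧ i ≤ p - 1) →
      ¬((i = 2 ∧ j = 3) ∨ (i = 3 ∧ j = 2)) → ⁅Y i, Y j⁆ = 0) :
    IsEmpty (L₁ ≃ₗ⁅ℝ⁆ L₂) ∧
    (X 2 ∉ LieAlgebra.derivedSeries ℝ L₁ 1 ∧
      Module.finrank ℝ (LinearMap.range (LieAlgebra.ad ℝ L₁ (X 2))) = 1) ∧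
    (∀ y : L₂, y ∉ LieAlgebra.derivedSeries ℝ L₂ 1 →
      2 ≤ Module.finrank ℝ (LinearMap.range (LieAlgebra.ad ℝ L₂ y))) := by
  have h2X : ∀ j, 1 ≤ j → j ≤ p → ⁅X 2, X j⁆ = if j = 1 then -X 3 else 0 := by
    intro j h1 h2
    split_ifs with h
    · subst h
      rw [← lie_skew, hbrackX 2 (by omega) (by omega)]
    · exact hzeroX 2 j (by omega) (by omega) h1 h2 (by omega) (by omega)
  have hX3 : X 3 ≠ 0 := by simpa using hindX.ne_zero ⟨2, by omega⟩
  have hrange : LinearMap.range (LieAlgebra.ad ℝ L₁ (X 2)) = Submodule.span ℝ {X 3} := by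
    rw [LinearMap.range_eq_map, ← hspanX, Submodule.map_span]
    apply le_antisymm
    · rw [Submodule.span_le]
      rintro _ ⟨_, ⟨j, ⟨h1, h2⟩, rfl⟩, rfl⟩
      rw [LieAlgebra.ad_apply, h2X j h1 h2]
      split_ifs
      · exact neg_mem (Submodule.mem_span_singleton_self _)
      · exact zero_mem _
    · rw [Submodule.span_singleton_le_iff_mem, ← neg_mem_iff]
      refine Submodule.subset_span ⟨X 1, ⟨1, ⟨le_rfl, by omega⟩, rfl⟩, ?_⟩
      rw [LieAlgebra.ad_apply, h2X 1 le_rfl (by omega), if_pos rfl]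
  have hX2 : X 2 ∉ LieAlgebra.derivedSeries ℝ L₁ 1 := by
    obtain ⟨c, hc, -⟩ := exists_coord hindX hspanX
    -- By bilinearity it suffices to check brackets of basis vectors, all of which are `0` or
    -- `± X k` with `k ≥ 3`.
    have hf : ∀ x y : L₁, c 2 ⁅x, y⁆ = 0 := by
      have : (LieModule.toEnd ℝ L₁ L₁ : L₁ →ₗ[ℝ] L₁ →ₗ[ℝ] L₁).compr₂ (c 2) = 0 := by
        refine LinearMap.ext_on hspanX ?_
        rintro _ ⟨i, ⟨hi1, hi2⟩, rfl⟩
        refine LinearMap.ext_on hspanX ?_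
        rintro _ ⟨j, ⟨hj1, hj2⟩, rfl⟩
        change c 2 ⁅X i, X j⁆ = 0
        by_cases h : i = 1 ∧ 2 ≤ j ∧ j ≤ p - 1
        · obtain ⟨rfl, h⟩ := h
          rw [hbrackX j h.1 h.2, hc 2 (j + 1) (by omega) (by omega), if_neg (by omega)]
        by_cases h' : j = 1 ∧ 2 ≤ i ∧ i ≤ p - 1
        · obtain ⟨rfl, h'⟩ := h'
          rw [← lie_skew, hbrackX i h'.1 h'.2, map_neg, hc 2 (i + 1) (by omega) (by omega),
            if_neg (by omega), neg_zero]
        rw [hzeroX i j hi1 hi2 hj1 hj2 h h', map_zero]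
      intro x y
      exact congrArg (fun g => g x y) this
    intro h
    have := eq_zero_of_mem_derived (c 2) hf h
    rw [hc 2 2 (by omega) (by omega)] at this
    simp at this
  have hrank : Module.finrank ℝ (LinearMap.range (LieAlgebra.ad ℝ L₁ (X 2))) = 1 := by
    rw [hrange, finrank_span_singleton hX3]
  have hL₂ : ∀ y : L₂, y ∉ LieAlgebra.derivedSeries ℝ L₂ 1 →
      2 ≤ Module.finrank ℝ (LinearMap.range (LieAlgebra.ad ℝ L₂ y)) := by
    intro y hy
    obtain ⟨c, hc, hsum⟩ := exists_coord hindY hspanY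
    have : Module.Finite ℝ L₂ :=
      ⟨Submodule.fg_def.2 ⟨_, (Set.finite_Icc 1 p).image Y, hspanY⟩⟩
    have hne : ∀ i, 1 ≤ i → i ≤ p → Y i ≠ 0 := by
      intro i h1 h2 h
      have := hc i i h1 h2
      simp [h] at this
    have hder : ∀ i, 3 ≤ i → i ≤ p → Y i ∈ LieAlgebra.derivedSeries ℝ L₂ 1 := by
      intro i h1 h2
      have := lie_mem_derived (Y 1) (Y (i - 1))
      rwa [hbrackY (i - 1) (by omega) (by omega), Nat.sub_add_cancel (by omega)] at this
    have h12 : c 1 y ≠ 0 ∨ c 2 y ≠ 0 := by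
      by_contra! h
      apply hy
      rw [hsum y]
      refine sum_mem fun i hi => ?_
      rw [Finset.mem_Icc] at hi
      rcases Nat.lt_or_ge i 3 with h3 | h3
      · have : c i y = 0 := by
          obtain rfl | rfl : i = 1 ∨ i = 2 := by omega
          exacts [h.1, h.2]
        rw [this, zero_smul]
        exact zero_mem _
      · exact SMulMemClass.smul_mem _ (hder i h3 hi.2)
    have hb3 : ⁅y, Y 3⁆ = c 1 y • Y 4 + c 2 y • Y p := by
      have : -(LieAlgebra.ad ℝ L₂ (Y 3) : L₂ →ₗ[ℝ] L₂)
          = (c 1).smulRight (Y 4) + (c 2).smulRight (Y p) := by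
        refine LinearMap.ext_on hspanY ?_
        rintro _ ⟨j, ⟨h1, h2⟩, rfl⟩
        simp only [LinearMap.neg_apply, LieAlgebra.ad_apply, lie_skew, LinearMap.add_apply,
          LinearMap.smulRight_apply, hc _ j h1 h2]
        by_cases hj1 : j = 1
        · subst hj1
          simp [hbrackY 3 (by omega) (by omega)]
        by_cases hj2 : j = 2
        · subst hj2
          simp [hbrackY']
        rw [hzeroY j 3 h1 h2 (by omega) (by omega) (by omega) (by omega) (by omega)]
        simp [hj1, hj2]
      simpa using congrArg (fun g => g y) this
    have hb4 : ⁅y, Y 4⁆ = c 1 y • Y 5 := by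
      have : -(LieAlgebra.ad ℝ L₂ (Y 4) : L₂ →ₗ[ℝ] L₂) = (c 1).smulRight (Y 5) := by
        refine LinearMap.ext_on hspanY ?_
        rintro _ ⟨j, ⟨h1, h2⟩, rfl⟩
        simp only [LinearMap.neg_apply, LieAlgebra.ad_apply, lie_skew,
          LinearMap.smulRight_apply, hc _ j h1 h2]
        by_cases hj1 : j = 1
        · subst hj1
          simp [hbrackY 4 (by omega) (by omega)]
        rw [hzeroY j 4 h1 h2 (by omega) (by omega) (by omega) (by omega) (by omega)]
        simp [hj1]
      simpa using congrArg (fun g => g y) this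
    have hb1 : c 3 ⁅y, Y 1⁆ = - c 2 y := by
      have : (c 3).comp (LieAlgebra.ad ℝ L₂ (Y 1) : L₂ →ₗ[ℝ] L₂) = c 2 := by
        refine LinearMap.ext_on hspanY ?_
        rintro _ ⟨j, ⟨h1, h2⟩, rfl⟩
        simp only [LinearMap.comp_apply, LieAlgebra.ad_apply, hc _ j h1 h2]
        by_cases h : 2 ≤ j ∧ j ≤ p - 1
        · rw [hbrackY j h.1 h.2, hc 3 (j + 1) (by omega) (by omega)]
          simp
        · rw [hzeroY 1 j le_rfl (by omega) h1 h2 (by omega) (by omega) (by omega), map_zero,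
            if_neg (by omega)]
      rw [← lie_skew, map_neg]
      exact congrArg Neg.neg (congrArg (fun g => g y) this)
    by_cases hy1 : c 1 y = 0
    · have hy2 : c 2 y ≠ 0 := h12.resolve_left (not_not_intro hy1)
      refine two_le_finrank _ (c 3) (u := ⁅y, Y 1⁆) (v := ⁅y, Y 3⁆) ⟨Y 1, rfl⟩ ⟨Y 3, rfl⟩
        ?_ ?_ ?_
      · rw [hb1]
        exact neg_ne_zero.2 hy2
      · have h3p : p ≠ 3 := by omega
        simp [hb3, hy1, hc 3 p (by omega) le_rfl, h3p]
      · rw [hb3, hy1, zero_smul, zero_add]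
        exact smul_ne_zero hy2 (hne p (by omega) le_rfl)
    · refine two_le_finrank _ (c 4) (u := ⁅y, Y 3⁆) (v := ⁅y, Y 4⁆) ⟨Y 3, rfl⟩ ⟨Y 4, rfl⟩
        ?_ ?_ ?_
      -- The fourth coordinate of `⁅y, Y 3⁆` is `y₁`, also when `p = 5`, where both vectors
      -- involve `Y 5`.
      · have h4p : p ≠ 4 := by omega
        simpa [hb3, hc 4 4 (by omega) (by omega), hc 4 p (by omega) le_rfl, h4p] using hy1
      · simp [hb4, hc 4 5 (by omega) hp]
      · rw [hb4]
        exact smul_ne_zero hy1 (hne 5 (by omega) hp)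
  refine ⟨⟨fun e => ?_⟩, ⟨hX2, hrank⟩, hL₂⟩
  have hnot : e (X 2) ∉ LieAlgebra.derivedSeries ℝ L₂ 1 := by
    intro h
    apply hX2
    have := LieIdeal.derivedSeries_map_le (R := ℝ) 1 (f := e.symm.toLieHom)
      (LieIdeal.mem_map h)
    simpa using this
  have h2 := hL₂ _ hnot
  have hmap : LinearMap.range (LieAlgebra.ad ℝ L₂ (e (X 2))) =
      (LinearMap.range (LieAlgebra.ad ℝ L₁ (X 2))).map (e.toLinearEquiv : L₁ →ₗ[ℝ] L₂) := by
    ext z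
    constructor
    · rintro ⟨w, rfl⟩
      refine ⟨⁅X 2, e.symm w⁆, ⟨e.symm w, rfl⟩, ?_⟩
      change e ⁅X 2, e.symm w⁆ = ⁅e (X 2), w⁆
      rw [LieEquiv.map_lie, LieEquiv.apply_symm_apply]
    · rintro ⟨_, ⟨w, rfl⟩, rfl⟩
      exact ⟨e w, (LieEquiv.map_lie e (X 2) w).symm⟩
  rw [hmap, LinearEquiv.finrank_map_eq, hrank] at h2
  omega
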